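/- arXiv:1705.05900 — 2 statements merged into one kernel-verified Lean document; each statement's English description precedes it below -/
import Mathlib

section
/- Let k ⊆ F be an extension of fields with the characteristic of k different from 2. Let L be a non-zero Lie subalgebra of Der_k(F) (the k-linear derivations of F with commutator bracket) which is also closed under multiplication by elements of F (an F-submodule of Der_k(F)). Then L is a simple Lie algebra over k: L is non-abelian and its only Lie ideals are 0 and L. -/
/-- Core argument: `P` is the membership predicate of an ideal of `L`. -/
theorem derivation_ideal_core
    (k : Type*) [Field k] (F : Type*) [Field F] [Algebra k F] (h2 : (2 : F) ≠ 0)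
    (L : LieSubalgebra k (Derivation k F F))
    (hsmul : ∀ (f : F) (η : Derivation k F F), η ∈ L → f • η ∈ L)
    (P : Derivation k F F → Prop) (hPL : ∀ η, P η → η ∈ L)
    (hsub : ∀ x y, P x → P y → P (x - y))
    (hlie : ∀ x y, P x → y ∈ L → P ⁅x, y⁆)
    (δ : Derivation k F F) (hδ : P δ) (hne : δ ≠ 0) (η : Derivation k F F) (hη : η ∈ L) :
    P η := by
  have hP0 : P 0 := by simpa using hsub δ δ hδ hδ
  have hneg : ∀ x, P x → P (-x) := fun x hx => by simpa using hsub 0 x hP0 hx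
  -- the key identity
  have key : ∀ (a : F), P (a • δ) → ∀ (g : F) (ξ : Derivation k F F), ξ ∈ L →
      P ((g * ξ a) • δ + (g * δ a) • ξ) := by
    intro a ha g ξ hξ
    have h := hsub _ _ (hlie δ _ hδ (hsmul a _ (hsmul g _ hξ))) (hlie (a • δ) _ ha (hsmul g _ hξ))
    convert h using 1
    ext x
    simp [Derivation.commutator_apply]
    ring
  obtain ⟨u, hu⟩ : ∃ u, δ u ≠ 0 := by
    by_contra! h
    exact hne (Derivation.ext h)
  obtain ⟨f, hf⟩ : ∃ f, δ (δ f) ≠ 0 := by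
    by_contra! h
    have h1 := h (u * u)
    simp [h] at h1
    have h3 : 2 * (δ u * δ u) = 0 := by linear_combination h1
    simp [h2, hu] at h3
  have hA : P (δ f • δ) := by
    convert hlie δ _ hδ (hsmul f _ (hPL _ hδ)) using 1
    ext x
    simp [Derivation.commutator_apply]
  have hF : ∀ c : F, P (c • δ) := by
    intro c
    convert key _ hA (c / (2 * δ (δ f))) δ (hPL _ hδ) using 1
    ext x
    simp
    field_simp
    ring
  convert hsub _ _ (key u (hF u) (δ u)⁻¹ η hη) (hF ((δ u)⁻¹ * η u)) using 1
  simp [hu]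

/-- A non-zero Lie subalgebra of `Der_k(F)` (for a field extension `k ⊆ F`,
`char k ≠ 2`) which is also an `F`-submodule is a simple Lie algebra over `k`. -/
theorem lie_subalgebra_of_derivations_isSimple
    (k : Type*) [Field k] (F : Type*) [Field F] [Algebra k F]
    (hchar : ringChar k ≠ 2)
    (L : LieSubalgebra k (Derivation k F F))
    (hL : L ≠ ⊥)
    (hsmul : ∀ (f : F) (η : Derivation k F F), η ∈ L → f • η ∈ L) :
    LieAlgebra.IsSimple k L := by
  have h2 : (2 : F) ≠ 0 := by
    have h := Ring.two_ne_zero hchar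
    intro h0
    apply h
    apply (algebraMap k F).injective
    rw [map_ofNat, map_zero, h0]
  refine ⟨fun I => ?_, fun hab => ?_⟩
  · by_cases hI : I = ⊥
    · exact Or.inl hI
    right
    obtain ⟨δ, hδ, hne⟩ : ∃ δ ∈ I, δ ≠ 0 := by
      by_contra! h
      exact hI ((LieSubmodule.eq_bot_iff I).2 h)
    rw [eq_top_iff]
    rintro ⟨η, hη⟩ -
    obtain ⟨_, h⟩ := derivation_ideal_core k F h2 L hsmul (fun x => ∃ h : x ∈ L, (⟨x, h⟩ : L) ∈ I)
      (fun _ h => h.1)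
      (fun x y hx hy => ⟨sub_mem hx.1 hy.1, sub_mem hx.2 hy.2⟩)
      (fun x y hx hy => ⟨L.lie_mem hx.1 hy, lie_mem_left k L I ⟨x, hx.1⟩ ⟨y, hy⟩ hx.2⟩)
      δ.1 ⟨δ.2, hδ⟩ (fun h => hne (Subtype.ext h)) η hη
    exact h
  · apply hL
    rw [LieSubalgebra.eq_bot_iff]
    intro D hD
    ext x
    have h := congrArg Subtype.val (hab.trivial ⟨D, hD⟩ ⟨x • D, hsmul x D hD⟩)
    have h' := DFunLike.congr_fun h x
    simpa [Derivation.commutator_apply] using h'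
end

section
/- Let k be an algebraically closed field of characteristic 0, let h ∈ k[x] be a monic polynomial of odd degree 2m+1 ≥ 3 with h and h′ coprime, and let A = k[x, y]/⟨y² − 2h(x)⟩. Then in the Lie algebra Der_k(A): (1) for every non-zero η ∈ Der_k(A), η is not in the image of ad(η), i.e., there is no ν ∈ Der_k(A) with [η, ν] = η; (2) there are no non-zero η, ν ∈ Der_k(A) and non-zero λ ∈ k with [ν, η] = λ·η (so Der_k(A) has no non-trivial semisimple elements); (3) if η ∈ Der_k(A) and ad(η) is nilpotent (some power of ad(η) is 0), then η = 0 (so Der_k(A) has no non-trivial nilpotent elements). -/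
set_option synthInstance.maxHeartbeats 400000

namespace HypEll
open Polynomial

section poly
variable {k : Type*} [Field k]

/-- weighted degree bound, with `x` of weight two -/
def Wt (a : k[X]) (n : ℤ) : Prop := ∀ i : ℕ, n < 2 * (i : ℤ) → a.coeff i = 0

lemma Wt.mul {a b : k[X]} {n l : ℤ} (ha : Wt a n) (hb : Wt b l) : Wt (a * b) (n + l) := by
  intro i hi
  rw [coeff_mul]
  apply Finset.sum_eq_zero
  rintro ⟨u, v⟩ huv
  have huv := Finset.HasAntidiagonal.mem_antidiagonal.mp huv
  simp only at huv ⊢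
  by_cases hu : n < 2 * (u : ℤ)
  · rw [ha u hu, zero_mul]
  · rw [hb v (by omega), mul_zero]

lemma Wt.add {a b : k[X]} {n : ℤ} (ha : Wt a n) (hb : Wt b n) : Wt (a + b) n := by
  intro i hi
  rw [coeff_add, ha i hi, hb i hi, add_zero]

lemma Wt.sub {a b : k[X]} {n : ℤ} (ha : Wt a n) (hb : Wt b n) : Wt (a - b) n := by
  intro i hi
  rw [coeff_sub, ha i hi, hb i hi, sub_zero]

lemma Wt.two_mul {a : k[X]} {n : ℤ} (ha : Wt a n) : Wt (2 * a) n := by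
  rw [_root_.two_mul]; exact ha.add ha

lemma Wt.der {a : k[X]} {n : ℤ} (ha : Wt a n) : Wt (derivative a) (n - 2) := by
  intro i hi
  rw [coeff_derivative, ha (i + 1) (by push_cast; omega), zero_mul]

lemma Wt.mono {a : k[X]} {n l : ℤ} (ha : Wt a n) (h : n ≤ l) : Wt a l :=
  fun i hi => ha i (by omega)

/-- the symbol polynomial -/
noncomputable def PP (s : k) (m : ℕ) (a b : k[X]) : k[X] :=
  expand k 2 a + C s * (X ^ (2 * m + 1) * expand k 2 b)

lemma PP_coeff_even (s : k) (m : ℕ) (a b : k[X]) (i : ℕ) :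
    (PP s m a b).coeff (2 * i) = a.coeff i := by
  unfold PP
  rw [coeff_add, coeff_expand (by norm_num), coeff_C_mul, coeff_X_pow_mul', coeff_expand (by norm_num)]
  rw [if_pos (by omega)]
  split_ifs with h1 h2
  · omega
  · simp
  · simp

lemma PP_coeff_odd (s : k) (m : ℕ) (a b : k[X]) (i : ℕ) :
    (PP s m a b).coeff (2 * i + (2 * m + 1)) = s * b.coeff i := by
  unfold PP
  rw [coeff_add, coeff_expand (by norm_num), coeff_C_mul, coeff_X_pow_mul, coeff_expand (by norm_num)]
  rw [if_neg (by omega), if_pos (by omega)]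
  simp

lemma PP_coeff_eq_zero (s : k) (m : ℕ) (a b : k[X]) (n : ℤ) (ha : Wt a n)
    (hb : Wt b (n - (2 * m + 1))) (i : ℕ) (hi : n < i) : (PP s m a b).coeff i = 0 := by
  unfold PP
  rw [coeff_add, coeff_expand (by norm_num), coeff_C_mul, coeff_X_pow_mul', coeff_expand (by norm_num)]
  have h1 : (if 2 ∣ i then a.coeff (i / 2) else 0) = 0 := by
    split_ifs with h
    · exact ha _ (by omega)
    · rfl
  rw [h1]
  split_ifs with h h'
  · rw [hb _ (by omega)]; simp
  · simp
  · simp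

lemma PP_wt (s : k) (hs : s ≠ 0) (m : ℕ) (a b : k[X]) :
    Wt a (PP s m a b).natDegree ∧ Wt b ((PP s m a b).natDegree - (2 * m + 1)) := by
  constructor
  · intro i hi
    rw [← PP_coeff_even s m a b]
    exact coeff_eq_zero_of_natDegree_lt (by omega)
  · intro i hi
    have := PP_coeff_odd s m a b i
    rw [coeff_eq_zero_of_natDegree_lt (by omega)] at this
    simpa [hs] using this.symm

lemma PP_inj (s : k) (hs : s ≠ 0) (m : ℕ) (a b : k[X]) (h : PP s m a b = 0) : a = 0 ∧ b = 0 := by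
  constructor
  · ext i
    rw [← PP_coeff_even s m a b, h]; simp
  · ext i
    have := PP_coeff_odd s m a b i
    rw [h] at this
    simpa [hs] using this.symm

/-- first component of the bracket -/
noncomputable def W1 (h a b c d : k[X]) : k[X] :=
  a * (2 * h * derivative d + d * derivative h) + 2 * h * b * derivative c
    - c * (2 * h * derivative b + b * derivative h) - 2 * h * d * derivative a

/-- second component of the bracket -/
noncomputable def W2 (h a b c d : k[X]) : k[X] :=
  a * derivative c - c * derivative a + 2 * h * (b * derivative d - d * derivative b)

lemma key_identity (s : k) (hs : s * s = 2) (m : ℕ) (r a b c d : k[X]) :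
    2 * (X * PP s m (W1 (r + X ^ (2 * m + 1)) a b c d) (W2 (r + X ^ (2 * m + 1)) a b c d)) =
      C s * (X ^ (2 * m) * (PP s m a b * (X * derivative (PP s m c d))
        - PP s m c d * (X * derivative (PP s m a b)))) +
      2 * (X * PP s m (W1 r a b c d) (2 * r * (b * derivative d - d * derivative b))) := by
  have hs' : (C s : k[X]) * C s = 2 := by rw [← C_mul, hs]; rfl
  unfold PP W1 W2
  simp only [derivative_add, derivative_mul, derivative_C, derivative_expand, derivative_X_pow,
    map_add, map_sub, map_mul, map_pow, expand_X, map_ofNat, map_natCast]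
  simp only [Nat.add_sub_cancel, pow_one, Nat.cast_ofNat, expand_C, Nat.cast_add, Nat.cast_mul, Nat.cast_one, map_add, map_mul, map_one, map_natCast, map_ofNat, show 2 - 1 = 1 from rfl]
  generalize expand k 2 a = a0
  generalize expand k 2 b = b0
  generalize expand k 2 c = c0
  generalize expand k 2 d = d0
  generalize expand k 2 (derivative a) = a1
  generalize expand k 2 (derivative b) = b1
  generalize expand k 2 (derivative c) = c1
  generalize expand k 2 (derivative d) = d1
  generalize expand k 2 (derivative r) = r1
  generalize expand k 2 r = r0
  generalize (C s : k[X]) = S at *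
  linear_combination (-(X ^ (2 * m) * (a0 * ((2 * (m : k[X]) + 1) * X ^ (2 * m + 1) * d0
      + X ^ (2 * m + 1) * 2 * X ^ 2 * d1) + X ^ (2 * m + 1) * b0 * (2 * X ^ 2 * c1)
      - c0 * ((2 * (m : k[X]) + 1) * X ^ (2 * m + 1) * b0
      + X ^ (2 * m + 1) * 2 * X ^ 2 * b1) - X ^ (2 * m + 1) * d0 * (2 * X ^ 2 * a1)
      + S * (X ^ (2 * m + 1) * 2 * X ^ 2 * X ^ (2 * m + 1) * (b0 * d1 - d0 * b1))))) * hs'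

lemma core (s : k) (hs : s * s = 2) [CharZero k] (m : ℕ) (r a b c d : k[X])
    (hr : Wt r (4 * m)) (hab : PP s m a b ≠ 0) (hcd : PP s m c d ≠ 0)
    (hne : (PP s m a b).natDegree ≠ (PP s m c d).natDegree) :
    PP s m (W1 (r + X ^ (2 * m + 1)) a b c d) (W2 (r + X ^ (2 * m + 1)) a b c d) ≠ 0 ∧
    (PP s m (W1 (r + X ^ (2 * m + 1)) a b c d) (W2 (r + X ^ (2 * m + 1)) a b c d)).natDegree + 1 =
      (PP s m a b).natDegree + (PP s m c d).natDegree + 2 * m := by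
  have hs0 : s ≠ 0 := by rintro rfl; simp at hs
  have key := key_identity s hs m r a b c d
  obtain ⟨wa, wb⟩ := PP_wt s hs0 m a b
  obtain ⟨wc, wd⟩ := PP_wt s hs0 m c d
  generalize hQ : PP s m (W1 (r + X ^ (2 * m + 1)) a b c d)
    (W2 (r + X ^ (2 * m + 1)) a b c d) = Q at *
  generalize hF : PP s m a b = F at *
  generalize hG : PP s m c d = G at *
  have hE1 : Wt (W1 r a b c d) (F.natDegree + G.natDegree + 2 * m - 2) := by
    unfold W1
    have e1 : Wt (2 * r * derivative d + d * derivative r) (G.natDegree + 2 * m - 2) :=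
      ((hr.two_mul.mul wd.der).mono (by linarith)).add ((wd.mul hr.der).mono (by linarith))
    have e2 : Wt (2 * r * derivative b + b * derivative r) (F.natDegree + 2 * m - 2) :=
      ((hr.two_mul.mul wb.der).mono (by linarith)).add ((wb.mul hr.der).mono (by linarith))
    refine Wt.sub (Wt.sub (Wt.add ((wa.mul e1).mono (by linarith)) ?_)
      ((wc.mul e2).mono (by linarith))) ?_
    · exact ((hr.two_mul.mul wb).mul wc.der).mono (by linarith)
    · exact ((hr.two_mul.mul wd).mul wa.der).mono (by linarith)
  have hE2 : Wt (2 * r * (b * derivative d - d * derivative b))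
      (F.natDegree + G.natDegree + 2 * m - 2 - (2 * m + 1)) := by
    refine (hr.two_mul.mul (Wt.sub (wb.mul wd.der) ((wd.mul wb.der).mono (by linarith)))).mono
      (by linarith)
  have hE := PP_coeff_eq_zero s m _ _ _ hE1 hE2
  generalize PP s m (W1 r a b c d) (2 * r * (b * derivative d - d * derivative b)) = E at *
  have hXd : ∀ P : k[X], (X * derivative P).natDegree ≤ P.natDegree := by
    intro P
    rw [natDegree_le_iff_coeff_eq_zero]
    intro N hN
    obtain _ | N := N
    · simp
    · rw [coeff_X_mul, coeff_derivative, coeff_eq_zero_of_natDegree_lt hN, zero_mul]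
  have hXc : ∀ (P : k[X]) (n : ℕ), (X * derivative P).coeff n = n * P.coeff n := by
    intro P n
    obtain _ | n := n
    · simp
    · rw [coeff_X_mul, coeff_derivative]; push_cast; ring
  have htop : (F * (X * derivative G) - G * (X * derivative F)).coeff (F.natDegree + G.natDegree)
      = ((G.natDegree : k) - F.natDegree) * (F.leadingCoeff * G.leadingCoeff) := by
    rw [coeff_sub, coeff_mul_add_eq_of_natDegree_le le_rfl (hXd G), add_comm F.natDegree,
      coeff_mul_add_eq_of_natDegree_le le_rfl (hXd F), hXc, hXc]
    simp only [leadingCoeff]; ring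
  have hTd : ∀ i, F.natDegree + G.natDegree < i →
      (F * (X * derivative G) - G * (X * derivative F)).coeff i = 0 := by
    intro i hi
    have h1 := hXd F
    have h2 := hXd G
    rw [coeff_sub, coeff_eq_zero_of_natDegree_lt, coeff_eq_zero_of_natDegree_lt, sub_zero]
    · exact lt_of_le_of_lt natDegree_mul_le (by omega)
    · exact lt_of_le_of_lt natDegree_mul_le (by omega)
  generalize F * (X * derivative G) - G * (X * derivative F) = T at *
  have hcoef : ∀ i : ℕ, F.natDegree + G.natDegree + 2 * m ≤ i + 1 → 2 * Q.coeff i =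
      s * (X ^ (2 * m) * T).coeff (i + 1) := by
    intro i hi
    have := congrArg (fun P => coeff P (i + 1)) key
    simp only [coeff_add, coeff_ofNat_mul, coeff_X_mul, coeff_C_mul] at this
    rw [this, hE i (by omega)]
    simp
  have hpos : 0 < F.natDegree + G.natDegree := by omega
  obtain ⟨n, hn⟩ : ∃ n, n + 1 = F.natDegree + G.natDegree + 2 * m :=
    ⟨F.natDegree + G.natDegree + 2 * m - 1, by omega⟩
  have hQn : Q.coeff n ≠ 0 := by
    intro h0
    have := hcoef n hn.ge
    rw [h0, hn, coeff_X_pow_mul, htop, mul_zero] at this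
    have h3 : (G.natDegree : k) - F.natDegree ≠ 0 := by
      rw [sub_ne_zero]; exact_mod_cast hne.symm
    have := this.symm
    simp [hs0, h3, hab, hcd] at this
  have hQd : Q.natDegree ≤ n := by
    rw [natDegree_le_iff_coeff_eq_zero]
    intro N hN
    have := hcoef N (by omega)
    rw [coeff_X_pow_mul', if_pos (by omega), hTd _ (by omega), mul_zero] at this
    simpa using this
  refine ⟨fun h0 => hQn (by simp [h0]), ?_⟩
  rw [← hn, le_antisymm hQd (le_natDegree_of_ne_zero hQn)]

lemma PP_sub_smul (s : k) (m : ℕ) (a b c d : k[X]) (t : k) :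
    PP s m (c - C t * a) (d - C t * b) = PP s m c d - C t * PP s m a b := by
  unfold PP
  simp only [map_sub, map_mul, expand_C]
  ring

lemma PP_X_mul (s : k) (m : ℕ) (a b : k[X]) :
    PP s m (X * a) (X * b) = X ^ 2 * PP s m a b := by
  unfold PP
  simp only [map_mul, expand_X]
  ring

lemma no_fix (s : k) (hs : s * s = 2) [CharZero k] (m : ℕ) (hm : 1 ≤ m) (h r a b c d : k[X])
    (hh : h = r + X ^ (2 * m + 1))
    (hr : Wt r (4 * m)) (h1 : W1 h a b c d = a) (h2 : W2 h a b c d = b) : a = 0 ∧ b = 0 := by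
  have hs0 : s ≠ 0 := by rintro rfl; simp at hs
  by_contra hne
  have hF : PP s m a b ≠ 0 := fun h0 => hne (PP_inj s hs0 m a b h0)
  have main : ∀ c d : k[X], W1 h a b c d = a → W2 h a b c d = b →
      (PP s m a b).natDegree = (PP s m c d).natDegree := by
    intro c d h1 h2
    by_contra hdeg
    have hG : PP s m c d ≠ 0 := by
      intro h0
      obtain ⟨rfl, rfl⟩ := PP_inj s hs0 m c d h0
      apply hne
      rw [← h1, ← h2]
      simp [W1, W2]
    have := (core s hs m r a b c d hr hF hG hdeg).2
    rw [← hh, h1, h2] at this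
    omega
  have e1 := main c d h1 h2
  set t := (PP s m c d).leadingCoeff / (PP s m a b).leadingCoeff with ht
  have h1' : W1 h a b (c - C t * a) (d - C t * b) = a := by
    refine Eq.trans ?_ h1
    simp only [W1, derivative_sub, derivative_mul, derivative_C]
    ring
  have h2' : W2 h a b (c - C t * a) (d - C t * b) = b := by
    refine Eq.trans ?_ h2
    simp only [W2, derivative_sub, derivative_mul, derivative_C]
    ring
  have e2 := main _ _ h1' h2'
  have hz : (PP s m (c - C t * a) (d - C t * b)).leadingCoeff = 0 := by
    rw [leadingCoeff, ← e2, PP_sub_smul, coeff_sub, coeff_C_mul]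
    have h3 : (PP s m c d).coeff (PP s m a b).natDegree = (PP s m c d).leadingCoeff := by
      rw [e1]; rfl
    have h4 : (PP s m a b).leadingCoeff ≠ 0 := leadingCoeff_ne_zero.mpr hF
    rw [h3, ht]
    change _ - _ * (PP s m a b).leadingCoeff = 0
    field_simp
    ring
  rw [leadingCoeff_eq_zero] at hz
  obtain ⟨z1, z2⟩ := PP_inj s hs0 m _ _ hz
  rw [z1, z2] at h1' h2'
  apply hne
  rw [← h1', ← h2']
  simp [W1, W2]

end poly

section alg
variable {k : Type*} [Field k] {A : Type*} [CommRing A] [Algebra k A]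

/-- the element `a(x) + b(x) y` -/
noncomputable def ev (x y : A) (a b : k[X]) : A := aeval x a + aeval x b * y

/-- `η` is `(a(x) + b(x) y)` times the canonical vector field -/
def Rep (h : k[X]) (x y : A) (η : Derivation k A A) (a b : k[X]) : Prop :=
  η x = ev x y a b * y ∧ η y = ev x y a b * aeval x (derivative h)

lemma Rep.apply_ev {h : k[X]} {x y : A} (hxy : y * y = 2 * aeval x h) {η : Derivation k A A}
    {a b : k[X]} (H : Rep h x y η a b) (c d : k[X]) :
    η (ev x y c d) = ev x y a b *
      ev x y (2 * h * derivative d + d * derivative h) (derivative c) := by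
  obtain ⟨h1, h2⟩ := H
  generalize ev x y a b = f at *
  simp only [ev, map_add, Derivation.leibniz, Derivation.map_aeval, h1, h2, smul_eq_mul, map_mul,
    map_ofNat]
  linear_combination f * (aeval x (derivative d)) * hxy

lemma Rep.lie {h : k[X]} {x y : A} (hxy : y * y = 2 * aeval x h) {η ν : Derivation k A A}
    {a b c d : k[X]} (H : Rep h x y η a b) (H' : Rep h x y ν c d) :
    Rep h x y ⁅η, ν⁆ (W1 h a b c d) (W2 h a b c d) := by
  have e1 := H.apply_ev hxy c d
  have e2 := H'.apply_ev hxy a b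
  have e3 : ev x y (W1 h a b c d) (W2 h a b c d) = η (ev x y c d) - ν (ev x y a b) := by
    rw [e1, e2]
    simp only [ev, W1, W2, map_add, map_sub, map_mul, map_ofNat]
    linear_combination (-(aeval x b * aeval x (derivative c))
      + aeval x d * aeval x (derivative a)) * hxy
  obtain ⟨h1, h2⟩ := H
  obtain ⟨h1', h2'⟩ := H'
  constructor
  · rw [Derivation.commutator_apply, h1, h1', e3, Derivation.leibniz, Derivation.leibniz, h2, h2']
    simp only [smul_eq_mul]
    ring
  · rw [Derivation.commutator_apply, h2, h2', e3, Derivation.leibniz, Derivation.leibniz,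
      Derivation.map_aeval, Derivation.map_aeval, h1, h1']
    simp only [smul_eq_mul]
    ring

lemma Rep.unique {h : k[X]} (h0 : 2 * h ≠ 0) {x y : A} (hxy : y * y = 2 * aeval x h)
    (hinj : ∀ a b : k[X], ev x y a b = 0 → a = 0 ∧ b = 0) {η : Derivation k A A}
    {a b c d : k[X]} (H : Rep h x y η a b) (H' : Rep h x y η c d) : a = c ∧ b = d := by
  have e := H.1.symm.trans H'.1
  have : ev x y (2 * h * (b - d)) (a - c) = 0 := by
    simp only [ev, map_sub, map_mul, map_ofNat] at e ⊢
    linear_combination e - (aeval x b - aeval x d) * hxy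
  obtain ⟨h1, h2⟩ := hinj _ _ this
  refine ⟨sub_eq_zero.mp h2, sub_eq_zero.mp ?_⟩
  exact (mul_eq_zero.mp h1).resolve_left h0

lemma Rep.eq_zero {h : k[X]} {x y : A} (hxy : y * y = 2 * aeval x h)
    (hsurj : ∀ z : A, ∃ a b : k[X], z = ev x y a b) {η : Derivation k A A}
    (H : Rep h x y η 0 0) : η = 0 := by
  ext z
  obtain ⟨c, d, rfl⟩ := hsurj z
  rw [H.apply_ev hxy]
  simp [ev]

lemma Rep.smul {h : k[X]} {x y : A} {η : Derivation k A A}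
    {a b : k[X]} (H : Rep h x y η a b) : Rep h x y (x • η) (X * a) (X * b) := by
  obtain ⟨h1, h2⟩ := H
  constructor
  · simp only [Derivation.smul_apply, h1, smul_eq_mul, ev, map_mul, aeval_X]; ring
  · simp only [Derivation.smul_apply, h2, smul_eq_mul, ev, map_mul, aeval_X]; ring

lemma Rep.zero {h : k[X]} {x y : A} : Rep h x y (0 : Derivation k A A) 0 0 := by
  simp [Rep, ev]

lemma Rep.exists [CharZero k] {h : k[X]} {x y : A} (hxy : y * y = 2 * aeval x h)
    (hcop : IsCoprime h (derivative h))
    (hinj : ∀ a b : k[X], ev x y a b = 0 → a = 0 ∧ b = 0)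
    (hsurj : ∀ z : A, ∃ a b : k[X], z = ev x y a b) (η : Derivation k A A) :
    ∃ a b, Rep h x y η a b := by
  obtain ⟨u, v, huv⟩ := hcop
  -- the relation `y η(y) = h'(x) η(x)`
  have two : ∀ z : A, 2 * z = 0 → z = 0 := by
    intro z hz
    obtain ⟨a, b, rfl⟩ := hsurj z
    have : ev x y (2 * a) (2 * b) = 0 := by
      rw [← hz]; simp only [ev, map_mul, map_ofNat]; ring
    obtain ⟨h1, h2⟩ := hinj _ _ this
    have t : (2 : k[X]) ≠ 0 := two_ne_zero
    rw [(mul_eq_zero.mp h1).resolve_left t, (mul_eq_zero.mp h2).resolve_left t]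
    simp [ev]
  have rel : y * η y = aeval x (derivative h) * η x := by
    have e := congrArg η hxy
    rw [two_mul, map_add, Derivation.leibniz, Derivation.map_aeval] at e
    simp only [smul_eq_mul] at e
    rw [← sub_eq_zero]
    apply two
    linear_combination e
  have one := congrArg (aeval x) huv
  simp only [map_add, map_mul, map_one] at one
  have half : algebraMap k A (1 / 2) * 2 = 1 := by
    rw [← map_ofNat (algebraMap k A) 2, ← map_mul]; simp
  obtain ⟨a, b, hab⟩ := hsurj (algebraMap k A (1 / 2) * aeval x u * y * η x + aeval x v * η y)
  refine ⟨a, b, ?_, ?_⟩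
  · rw [← hab]
    linear_combination (-aeval x v) * rel - η x * one
      - algebraMap k A (1 / 2) * aeval x u * η x * hxy - aeval x u * aeval x h * η x * half
  · rw [← hab]
    linear_combination (algebraMap k A (1 / 2) * aeval x u * y) * rel - η y * one
      - algebraMap k A (1 / 2) * aeval x u * η y * hxy - aeval x u * aeval x h * η y * half

theorem abstract_main [IsAlgClosed k] [CharZero k] (m : ℕ) (hm : 1 ≤ m)
    (h : k[X]) (hmonic : h.Monic) (hdeg : h.natDegree = 2 * m + 1)
    (hcop : IsCoprime h (derivative h)) (x y : A) (hxy : y * y = 2 * aeval x h)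
    (hinj : ∀ a b : k[X], ev x y a b = 0 → a = 0 ∧ b = 0)
    (hsurj : ∀ z : A, ∃ a b : k[X], z = ev x y a b) :
    (∀ η : Derivation k A A, η ≠ 0 → ¬ ∃ ν, ⁅η, ν⁆ = η) ∧
    (¬ ∃ (η ν : Derivation k A A) (l : k), η ≠ 0 ∧ ν ≠ 0 ∧ l ≠ 0 ∧ ⁅ν, η⁆ = l • η) ∧
    (∀ η : Derivation k A A, IsNilpotent (LieAlgebra.ad k (Derivation k A A) η) → η = 0) := by
  obtain ⟨s, hs⟩ := IsAlgClosed.exists_pow_nat_eq (2 : k) (n := 2) (by norm_num)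
  rw [pow_two] at hs
  have hs0 : s ≠ 0 := by rintro rfl; simp at hs
  have h0 : 2 * h ≠ 0 := mul_ne_zero two_ne_zero hmonic.ne_zero
  obtain ⟨r, hr⟩ : ∃ r, r = h - X ^ (2 * m + 1) := ⟨_, rfl⟩
  have hh : h = r + X ^ (2 * m + 1) := by rw [hr]; ring
  have hrw : Wt r (4 * m) := by
    intro i hi
    rw [hr, coeff_sub, coeff_X_pow]
    split_ifs with hi'
    · rw [hi', ← hdeg, hmonic.coeff_natDegree, sub_self]
    · rw [coeff_eq_zero_of_natDegree_lt (by omega), sub_zero]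
  have P1 : ∀ η : Derivation k A A, η ≠ 0 → ¬ ∃ ν, ⁅η, ν⁆ = η := by
    rintro η hη ⟨ν, hν⟩
    obtain ⟨a, b, H⟩ := Rep.exists hxy hcop hinj hsurj η
    obtain ⟨c, d, H'⟩ := Rep.exists hxy hcop hinj hsurj ν
    have H2 := H.lie hxy H'
    rw [hν] at H2
    obtain ⟨e1, e2⟩ := H2.unique h0 hxy hinj H
    obtain ⟨rfl, rfl⟩ := no_fix s hs m hm h r a b c d hh hrw e1 e2
    exact hη (H.eq_zero hxy hsurj)
  refine ⟨P1, ?_, ?_⟩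
  · rintro ⟨η, ν, l, hη, -, hl, e⟩
    refine P1 η hη ⟨(-l⁻¹) • ν, ?_⟩
    ext z
    have ez := congrArg (fun D : Derivation k A A => D z) e
    simp only [Derivation.commutator_apply, Derivation.smul_apply] at ez ⊢
    rw [Derivation.map_smul, ← smul_sub, ← neg_sub (ν (η z)), ez, smul_neg, neg_smul, neg_neg,
      smul_smul, inv_mul_cancel₀ hl, one_smul]
  · rintro η ⟨n, hn⟩
    by_contra hη
    obtain ⟨a, b, H⟩ := Rep.exists hxy hcop hinj hsurj η
    have hF : PP s m a b ≠ 0 := by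
      intro hz
      obtain ⟨rfl, rfl⟩ := PP_inj s hs0 m a b hz
      exact hη (H.eq_zero hxy hsurj)
    have claim : ∀ j : ℕ, ∃ c d, Rep h x y (((LieAlgebra.ad k (Derivation k A A) η) ^ j) (x • η)) c d ∧
        PP s m c d ≠ 0 ∧ (PP s m a b).natDegree < (PP s m c d).natDegree := by
      intro j
      induction j with
      | zero =>
        refine ⟨_, _, by simpa using H.smul, ?_, ?_⟩
        · rw [PP_X_mul]; exact mul_ne_zero (by simp) hF
        · rw [PP_X_mul, natDegree_mul (by simp) hF, natDegree_X_pow]; omega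
      | succ j ih =>
        obtain ⟨c, d, H', hG, hlt⟩ := ih
        refine ⟨_, _, by rw [pow_succ', Module.End.mul_apply, LieAlgebra.ad_apply]; exact H.lie hxy H', ?_⟩
        have := core s hs m r a b c d hrw hF hG hlt.ne
        rw [← hh] at this
        exact ⟨this.1, by omega⟩
    obtain ⟨c, d, H', hG, -⟩ := claim n
    rw [hn, LinearMap.zero_apply] at H'
    obtain ⟨rfl, rfl⟩ := H'.unique h0 hxy hinj Rep.zero
    exact hG (by simp [PP])

/-- model of the coordinate ring -/
abbrev QA (h : k[X]) := QuadraticAlgebra k[X] (2 * h) 0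

end alg
end HypEll

/-- On a non-singular hyperelliptic curve `y² = 2h(x)`: (1) no non-zero vector field `η` lies
in the image of `ad(η)`; (2) the Lie algebra of vector fields has no non-trivial semisimple
elements; (3) it has no non-trivial nilpotent elements. -/
theorem hyperelliptic_no_semisimple_or_nilpotent
    (k : Type*) [Field k] [IsAlgClosed k] [CharZero k]
    (m : ℕ) (hm : 1 ≤ m)
    (h : Polynomial k) (hmonic : h.Monic) (hdeg : h.natDegree = 2 * m + 1)
    (hcop : IsCoprime h (Polynomial.derivative h))
    (I : Ideal (MvPolynomial (Fin 2) k))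
    (hI : I = Ideal.span {MvPolynomial.X 1 ^ 2 -
      2 * Polynomial.aeval (MvPolynomial.X 0) h}) :
    (∀ η : Derivation k (MvPolynomial (Fin 2) k ⧸ I) (MvPolynomial (Fin 2) k ⧸ I),
      η ≠ 0 → ¬ ∃ ν, ⁅η, ν⁆ = η) ∧
    (¬ ∃ (η ν : Derivation k (MvPolynomial (Fin 2) k ⧸ I) (MvPolynomial (Fin 2) k ⧸ I))
        (l : k), η ≠ 0 ∧ ν ≠ 0 ∧ l ≠ 0 ∧ ⁅ν, η⁆ = l • η) ∧
    (∀ η : Derivation k (MvPolynomial (Fin 2) k ⧸ I) (MvPolynomial (Fin 2) k ⧸ I),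
      IsNilpotent (LieAlgebra.ad k
        (Derivation k (MvPolynomial (Fin 2) k ⧸ I) (MvPolynomial (Fin 2) k ⧸ I)) η) →
      η = 0) := by
  classical
  subst hI
  set I := Ideal.span {(MvPolynomial.X 1 ^ 2 -
      2 * Polynomial.aeval (MvPolynomial.X 0) h : MvPolynomial (Fin 2) k)} with hI
  have hxy : (Ideal.Quotient.mk I (MvPolynomial.X 1)) * (Ideal.Quotient.mk I (MvPolynomial.X 1)) =
      2 * Polynomial.aeval (Ideal.Quotient.mk I (MvPolynomial.X 0)) h := by
    have e : Polynomial.aeval (Ideal.Quotient.mk I (MvPolynomial.X 0)) h =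
        Ideal.Quotient.mk I (Polynomial.aeval (MvPolynomial.X 0) h) :=
      Polynomial.aeval_algHom_apply (Ideal.Quotient.mkₐ k I) _ h
    rw [e, ← map_ofNat (Ideal.Quotient.mk I) 2, ← map_mul, ← map_mul, Ideal.Quotient.eq]
    apply Ideal.subset_span
    rw [Set.mem_singleton_iff, pow_two]
  refine HypEll.abstract_main m hm h hmonic hdeg hcop (Ideal.Quotient.mk I (MvPolynomial.X 0))
    (Ideal.Quotient.mk I (MvPolynomial.X 1)) hxy ?_ ?_
  · intro a b hab
    let ψ : MvPolynomial (Fin 2) k →ₐ[k] (HypEll.QA h) :=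
      MvPolynomial.aeval ![algebraMap (Polynomial k) (HypEll.QA h) Polynomial.X, (⟨0, 1⟩ : (HypEll.QA h))]
    have hψ0 : ψ (MvPolynomial.X 0) = algebraMap (Polynomial k) (HypEll.QA h) Polynomial.X := by simp [ψ]
    have hψ1 : ψ (MvPolynomial.X 1) = (⟨0, 1⟩ : (HypEll.QA h)) := by simp [ψ]
    have hψp : ∀ p : Polynomial k, ψ (Polynomial.aeval (MvPolynomial.X 0) p) =
        algebraMap (Polynomial k) (HypEll.QA h) p := by
      intro p
      rw [← Polynomial.aeval_algHom_apply, hψ0, Polynomial.aeval_algebraMap_apply,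
        Polynomial.aeval_X_left_apply]
    have hker : ∀ z ∈ I, ψ z = 0 := by
      intro z hz
      have : I ≤ RingHom.ker ψ := by
        rw [hI, Ideal.span_le, Set.singleton_subset_iff]
        change ψ _ = 0
        rw [map_sub, map_pow, map_mul, hψp, hψ1, map_ofNat, ← map_ofNat (algebraMap (Polynomial k) (HypEll.QA h)) 2,
          ← map_mul, pow_two, sub_eq_zero]
        apply QuadraticAlgebra.ext <;> simp
      exact this hz
    have hmem : Polynomial.aeval (MvPolynomial.X 0) a +
        Polynomial.aeval (MvPolynomial.X 0) b * MvPolynomial.X 1 ∈ I := by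
      rw [← Ideal.Quotient.eq_zero_iff_mem, map_add, map_mul, ← hab, HypEll.ev]
      congr 1
      · exact (Polynomial.aeval_algHom_apply (Ideal.Quotient.mkₐ k I) _ a).symm
      · congr 1
        exact (Polynomial.aeval_algHom_apply (Ideal.Quotient.mkₐ k I) _ b).symm
    have := hker _ hmem
    rw [map_add, map_mul, hψp, hψp, hψ1] at this
    have h1 := congrArg QuadraticAlgebra.re this
    have h2 := congrArg QuadraticAlgebra.im this
    simp at h1 h2
    exact ⟨h1, h2⟩
  · intro z
    obtain ⟨p, rfl⟩ := Ideal.Quotient.mk_surjective z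
    induction p using MvPolynomial.induction_on with
    | C t =>
      refine ⟨Polynomial.C t, 0, ?_⟩
      simp only [HypEll.ev, Polynomial.aeval_C, map_zero, zero_mul, add_zero]
      rfl
    | add p q hp hq =>
      obtain ⟨a, b, hp⟩ := hp
      obtain ⟨c, d, hq⟩ := hq
      refine ⟨a + c, b + d, ?_⟩
      rw [map_add, hp, hq]
      simp only [HypEll.ev, map_add]
      ring
    | mul_X p i hp =>
      obtain ⟨a, b, hp⟩ := hp
      rw [map_mul, hp]
      fin_cases i
      · refine ⟨Polynomial.X * a, Polynomial.X * b, ?_⟩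
        simp only [HypEll.ev, map_mul, Polynomial.aeval_X]
        change _ * Ideal.Quotient.mk I (MvPolynomial.X 0) = _
        ring
      · refine ⟨2 * h * b, a, ?_⟩
        simp only [HypEll.ev, map_mul, map_ofNat]
        change _ * Ideal.Quotient.mk I (MvPolynomial.X 1) = _
        linear_combination Polynomial.aeval (Ideal.Quotient.mk I (MvPolynomial.X 0)) b * hxy
end
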